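/- Let a > 0, b ≥ 0, x ≥ 0, y ≥ 0 be real numbers and let α ∈ (0, 1/3). If |x − a| ≤ α·a and |(x + y) − (a + b)| ≤ α·(a + b), then x + y > 0 and |x/(x+y) − a/(a+b)| ≤ 3α. -/

import Mathlib

/-!
Suppose `x` approximates `a` with relative error `α`, and `t` approximates `s` with relative error
`β`. The identity `(x / t - a / s) * t = (x - a) - a / s * (t - s)` bounds `|x / t - a / s| * |t|`
by `(α + β) * |a|`. Since `|t| ≥ (1 - β) * |s|`, the relative error of the quotient is at most
`(α + β) / (1 - β)`, which for `β = α ≤ 1 / 3` is at most `3 * α`.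
-/

lemma one_sub_mul_abs_le_abs_of_abs_sub_le {R : Type*} [CommRing R] [LinearOrder R]
    [IsStrictOrderedRing R] {s t β : R} (h : |t - s| ≤ β * |s|) : (1 - β) * |s| ≤ |t| := by
  have : |s| - |t| ≤ |t - s| := abs_sub_comm t s ▸ abs_sub_abs_le_abs_sub s t
  linarith

section RelativeError

variable {K : Type*} [Field K] [LinearOrder K] [IsStrictOrderedRing K] {a s t x α β : K}

lemma abs_div_sub_div_mul_abs_le (hs : s ≠ 0) (ht : t ≠ 0) (hxa : |x - a| ≤ α * |a|)
    (hts : |t - s| ≤ β * |s|) : |x / t - a / s| * |t| ≤ (α + β) * |a| := by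
  have hs' : |s| ≠ 0 := abs_ne_zero.mpr hs
  calc |x / t - a / s| * |t| = |(x - a) - a / s * (t - s)| := by
        rw [← abs_mul]
        congr 1
        field_simp
        ring
    _ ≤ |x - a| + |a| / |s| * |t - s| := by
        rw [← abs_div, ← abs_mul]
        exact abs_sub _ _
    _ ≤ α * |a| + |a| / |s| * (β * |s|) := by gcongr
    _ = (α + β) * |a| := by field_simp

lemma abs_div_sub_div_le_of_rel_close (hs : s ≠ 0) (hβ : β < 1) (hxa : |x - a| ≤ α * |a|)
    (hts : |t - s| ≤ β * |s|) : |x / t - a / s| ≤ (α + β) / (1 - β) * |a / s| := by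
  have hst : (1 - β) * |s| ≤ |t| := one_sub_mul_abs_le_abs_of_abs_sub_le hts
  have hs_pos : 0 < (1 - β) * |s| := mul_pos (sub_pos.mpr hβ) (abs_pos.mpr hs)
  have ht : t ≠ 0 := abs_pos.mp (hs_pos.trans_le hst)
  rw [abs_div a s, div_mul_div_comm, le_div_iff₀ hs_pos]
  calc |x / t - a / s| * ((1 - β) * |s|) ≤ |x / t - a / s| * |t| := by gcongr
    _ ≤ (α + β) * |a| := abs_div_sub_div_mul_abs_le hs ht hxa hts

lemma add_self_div_one_sub_le_three_mul (hα₀ : 0 ≤ α) (hα : α ≤ 1 / 3) :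
    (α + α) / (1 - α) ≤ 3 * α := by
  rw [div_le_iff₀ (by linarith)]
  have : 0 ≤ α * (1 / 3 - α) := mul_nonneg hα₀ (sub_nonneg.mpr hα)
  linarith

theorem abs_ratio_sub_ratio_le_of_rel_close_general (hs : 0 < s) (has : |a| ≤ s)
    (hα : α ≤ 1 / 3) (hxa : |x - a| ≤ α * |a|) (hts : |t - s| ≤ α * s) :
    0 < t ∧ |x / t - a / s| ≤ 3 * α := by
  have hα₀ : 0 ≤ α := nonneg_of_mul_nonneg_left ((abs_nonneg _).trans hts) hs
  have hα₁ : α < 1 := by linarith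
  have ht : 0 < t := by
    have : |t - s| < s := hts.trans_lt (mul_lt_of_lt_one_left hs hα₁)
    linarith [(abs_lt.mp this).1]
  have ha_div_s : |a / s| ≤ 1 := by
    rwa [abs_div, abs_of_pos hs, div_le_one hs]
  refine ⟨ht, ?_⟩
  calc |x / t - a / s| ≤ (α + α) / (1 - α) * |a / s| :=
        abs_div_sub_div_le_of_rel_close hs.ne' hα₁ hxa (by rwa [abs_of_pos hs])
    _ ≤ 3 * α * 1 := by
        gcongr
        exact add_self_div_one_sub_le_three_mul hα₀ hα
    _ = 3 * α := mul_one _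

end RelativeError

/-- Let `a > 0`, `b ≥ 0`, `x ≥ 0`, `y ≥ 0` be reals and `α ∈ (0, 1/3)`.
If `|x − a| ≤ α a` and `|(x + y) − (a + b)| ≤ α (a + b)`, then `x + y > 0` and
`|x/(x+y) − a/(a+b)| ≤ 3 α`. -/
theorem abs_ratio_sub_ratio_le_of_rel_close
    (a b x y α : ℝ) (ha : 0 < a) (hb : 0 ≤ b) (hx : 0 ≤ x) (hy : 0 ≤ y)
    (hα : α ∈ Set.Ioo (0:ℝ) (1/3))
    (h1 : |x - a| ≤ α * a) (h2 : |(x + y) - (a + b)| ≤ α * (a + b)) :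
    0 < x + y ∧ |x / (x + y) - a / (a + b)| ≤ 3 * α := by
  have ha_abs : |a| = a := abs_of_pos ha
  exact abs_ratio_sub_ratio_le_of_rel_close_general (by linarith) (by linarith) hα.2.le
    (by rwa [ha_abs]) h2
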